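/- Consider the asynchronous mini-batching sweep (Algorithm 2) run for T rounds with a nondecreasing sequence of positive integer batch sizes B_1 ≤ B_2 ≤ … and phase lengths K_i = 2^{i−1}, driven by a delay sequence d_1, …, d_T. If the number I of fully completed phases satisfies I ≥ 1, then for every q ∈ (0,1] and every q-quantile delay τ_q of the sequence, qT < 2(B_{I+1} + τ_q) K_{I+1}. -/

import Mathlib

open Finset

/-!
An epoch starting at round `s` rejects a round `t` of delay at most `τ` only if `t < s + τ`. Hence
an epoch of batch size `b` contains at most `b + τ` rounds of delay at most `τ`, and strictly fewer
if it does not complete. Before phase `I + 1` completes, at most `2 ^ (I + 1) - 1` epochs are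
started, each of batch size at most `B (I + 1)`; at least `q * T` of the `T` rounds they cover have
delay at most `τ`.
-/

lemma card_filter_Ico_le_add {α : Type*} [LinearOrder α] [LocallyFiniteOrder α]
    (p : α → Prop) [DecidablePred p] (a b c : α) :
    #{x ∈ Ico a c | p x} ≤ #{x ∈ Ico a b | p x} + #{x ∈ Ico b c | p x} := by
  calc #{x ∈ Ico a c | p x}
      ≤ #{x ∈ Ico a b ∪ Ico b c | p x} :=
        card_le_card (filter_subset_filter p Ico_subset_Ico_union_Ico)
    _ ≤ #{x ∈ Ico a b | p x} + #{x ∈ Ico b c | p x} := by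
      rw [filter_union]
      exact card_union_le _ _

/-- The rounds accepted up to round `e` by an epoch starting at round `s`, under the delay
sequence `d`. The acceptance condition `s ≤ t - d t` is stated without truncated subtraction. -/
def acceptedRounds (d : ℕ → ℕ) (s e : ℕ) : Finset ℕ :=
  {t ∈ Icc s e | s + d t ≤ t}

/-- A run of asynchronous mini-batching over the rounds `1, …, T` with delay sequence `d`, in which
exactly the epochs `1, …, N` complete. Epoch `m` has batch size `b m`, starts at round `start m`
and, if `m ≤ N`, completes at round `finish m`. Batch sizes are indexed by epochs, so that the
grouping of the epochs into phases is a choice of `b`. -/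
structure IsMinibatchRun (d b start finish : ℕ → ℕ) (T N : ℕ) : Prop where
  start_one : start 1 = 1
  completes : ∀ m, 1 ≤ m → m ≤ N →
    start m + d (finish m) ≤ finish m ∧ finish m ≤ T ∧
    #(acceptedRounds d (start m) (finish m)) = b m ∧ start (m + 1) = finish m + 1
  last_incomplete : #(acceptedRounds d (start (N + 1)) T) < b (N + 1)

lemma card_delay_le_le_card_acceptedRounds_add (d : ℕ → ℕ) (τ s e : ℕ) :
    #{t ∈ Icc s e | d t ≤ τ} ≤ #(acceptedRounds d s e) + τ := by
  have hsub : {t ∈ Icc s e | d t ≤ τ} ⊆ acceptedRounds d s e ∪ Ico s (s + τ) := by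
    intro t ht
    simp only [acceptedRounds, mem_filter, mem_Icc, mem_union, mem_Ico] at ht ⊢
    omega
  calc #{t ∈ Icc s e | d t ≤ τ}
      ≤ #(acceptedRounds d s e ∪ Ico s (s + τ)) := card_le_card hsub
    _ ≤ #(acceptedRounds d s e) + #(Ico s (s + τ)) := card_union_le _ _
    _ = #(acceptedRounds d s e) + τ := by rw [Nat.card_Ico, Nat.add_sub_cancel_left]

namespace IsMinibatchRun

variable {d b start finish : ℕ → ℕ} {T N : ℕ}

lemma card_delay_le_before_start_le (run : IsMinibatchRun d b start finish T N) (τ : ℕ) {m : ℕ}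
    (hm : m ≤ N) :
    #{t ∈ Ico 1 (start (m + 1)) | d t ≤ τ} ≤ ∑ k ∈ Icc 1 m, (b k + τ) := by
  induction m with
  | zero => simp [run.start_one]
  | succ m ih =>
    obtain ⟨-, -, hcard, hnext⟩ := run.completes (m + 1) (Nat.le_add_left 1 m) hm
    have hepoch : #{t ∈ Ico (start (m + 1)) (start (m + 2)) | d t ≤ τ} ≤ b (m + 1) + τ := by
      rw [hnext, Ico_add_one_right_eq_Icc, ← hcard]
      exact card_delay_le_le_card_acceptedRounds_add d τ _ _
    calc #{t ∈ Ico 1 (start (m + 2)) | d t ≤ τ}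
        ≤ #{t ∈ Ico 1 (start (m + 1)) | d t ≤ τ} +
            #{t ∈ Ico (start (m + 1)) (start (m + 2)) | d t ≤ τ} :=
          card_filter_Ico_le_add _ _ _ _
      _ ≤ ∑ k ∈ Icc 1 m, (b k + τ) + (b (m + 1) + τ) :=
          Nat.add_le_add (ih (Nat.le_of_succ_le hm)) hepoch
      _ = ∑ k ∈ Icc 1 (m + 1), (b k + τ) := (sum_Icc_succ_top (Nat.le_add_left 1 m) _).symm

lemma card_delay_le_lt_sum (run : IsMinibatchRun d b start finish T N) (τ : ℕ) :
    #{t ∈ Icc 1 T | d t ≤ τ} < ∑ m ∈ Icc 1 (N + 1), (b m + τ) := by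
  have hlast : #{t ∈ Icc (start (N + 1)) T | d t ≤ τ} < b (N + 1) + τ :=
    (card_delay_le_le_card_acceptedRounds_add d τ _ _).trans_lt
      (Nat.add_lt_add_right run.last_incomplete τ)
  calc #{t ∈ Icc 1 T | d t ≤ τ}
      ≤ #{t ∈ Ico 1 (start (N + 1)) | d t ≤ τ} + #{t ∈ Icc (start (N + 1)) T | d t ≤ τ} := by
        simpa only [Ico_add_one_right_eq_Icc] using
          card_filter_Ico_le_add (fun t => d t ≤ τ) 1 (start (N + 1)) (T + 1)
    _ < ∑ m ∈ Icc 1 N, (b m + τ) + (b (N + 1) + τ) :=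
        Nat.add_lt_add_of_le_of_lt (run.card_delay_le_before_start_le τ le_rfl) hlast
    _ = ∑ m ∈ Icc 1 (N + 1), (b m + τ) := (sum_Icc_succ_top (Nat.le_add_left 1 N) _).symm

lemma card_delay_le_lt_mul (run : IsMinibatchRun d b start finish T N) {C : ℕ}
    (hb : ∀ m ∈ Icc 1 (N + 1), b m ≤ C) (τ : ℕ) :
    #{t ∈ Icc 1 T | d t ≤ τ} < (N + 1) * (C + τ) :=
  calc #{t ∈ Icc 1 T | d t ≤ τ}
      < ∑ m ∈ Icc 1 (N + 1), (b m + τ) := run.card_delay_le_lt_sum τ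
    _ ≤ #(Icc 1 (N + 1)) • (C + τ) :=
        sum_le_card_nsmul _ _ _ fun m hm => Nat.add_le_add_right (hb m hm) τ
    _ = (N + 1) * (C + τ) := by rw [Nat.card_Icc, Nat.add_sub_cancel, smul_eq_mul]

end IsMinibatchRun

theorem async_minibatch_sweep_bound_general {T N I τ : ℕ} {d B ts es : ℕ → ℕ} {q : ℝ}
    (hB : Monotone B)
    (run : IsMinibatchRun d (fun m => B (Nat.log2 m + 1)) ts es T N)
    (hN : N < 2 ^ (I + 1) - 1)
    (hτ : ⌈q * T⌉₊ ≤ #{t ∈ Icc 1 T | d t ≤ τ}) :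
    q * T < 2 * ((B (I + 1) : ℝ) + τ) * 2 ^ I := by
  have hepochs : N + 1 ≤ 2 ^ (I + 1) := by omega
  have hbatch : ∀ m ∈ Icc 1 (N + 1), B (Nat.log2 m + 1) ≤ B (I + 1) := by
    intro m hm
    obtain ⟨hm1, hmN⟩ := mem_Icc.1 hm
    have hlog : Nat.log2 m < I + 1 := (Nat.log2_lt (by omega)).2 (by omega)
    exact hB hlog
  have hcount : ⌈q * T⌉₊ < 2 * (B (I + 1) + τ) * 2 ^ I :=
    calc ⌈q * T⌉₊ ≤ #{t ∈ Icc 1 T | d t ≤ τ} := hτ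
      _ < (N + 1) * (B (I + 1) + τ) := run.card_delay_le_lt_mul hbatch τ
      _ ≤ 2 ^ (I + 1) * (B (I + 1) + τ) := Nat.mul_le_mul_right _ hepochs
      _ = 2 * (B (I + 1) + τ) * 2 ^ I := by ring
  exact (Nat.le_ceil _).trans_lt (mod_cast hcount)

/-- for Algorithm 2 (asynchronous mini-batching sweep with
nondecreasing batch sizes B_1 ≤ B_2 ≤ … and phase lengths K_i = 2^{i-1}) run
for T rounds: if at least one phase (I ≥ 1) fully completes, then for every
q ∈ (0,1] and every q-quantile delay τ, qT < 2(B_{I+1} + τ)K_{I+1}.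

Epochs are numbered globally m = 1, 2, …; since the first i phases comprise
2^i - 1 epochs, the global epoch m belongs to phase `Nat.log2 m + 1` and uses
batch size `B (Nat.log2 m + 1)`. The sequences `ts`, `es` give the start and
completion rounds of the epochs; a round t of an epoch starting at s is
accepted iff s + d t ≤ t; an epoch completes at its B-th accepted round. N is
the number of globally completed epochs within the T rounds (epoch N+1 does
not complete), and I is the number of fully completed phases, i.e.
2^I - 1 ≤ N < 2^{I+1} - 1. -/
theorem async_minibatch_sweep_bound
    (T : ℕ) (hT : 1 ≤ T)
    (d : ℕ → ℕ) (hd : ∀ t, 1 ≤ t → t ≤ T → d t < t)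
    (B : ℕ → ℕ) (hBpos : ∀ i, 1 ≤ B i) (hBmono : ∀ i j, i ≤ j → B i ≤ B j)
    (ts es : ℕ → ℕ) (N I : ℕ) (hI : 1 ≤ I)
    (hts1 : ts 1 = 1)
    (hcomp : ∀ m, 1 ≤ m → m ≤ N →
      ts m + d (es m) ≤ es m ∧ es m ≤ T ∧
      ((Finset.Icc (ts m) (es m)).filter (fun t => ts m + d t ≤ t)).card
        = B (Nat.log2 m + 1) ∧
      ts (m + 1) = es m + 1)
    (hincomp :
      ((Finset.Icc (ts (N + 1)) T).filter (fun t => ts (N + 1) + d t ≤ t)).card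
        < B (Nat.log2 (N + 1) + 1))
    (hNlow : 2 ^ I - 1 ≤ N) (hNhigh : N < 2 ^ (I + 1) - 1)
    (q : ℝ) (hq0 : 0 < q) (hq1 : q ≤ 1)
    (τ : ℕ)
    (hτ : (⌈q * T⌉₊ : ℕ) ≤ ((Finset.Icc 1 T).filter (fun t => d t ≤ τ)).card) :
    q * T < 2 * ((B (I + 1) : ℝ) + τ) * 2 ^ I :=
  async_minibatch_sweep_bound_general (fun i j => hBmono i j) ⟨hts1, hcomp, hincomp⟩ hNhigh hτ
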